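/- arXiv:2012.06528 — 2 statements merged into one kernel-verified Lean document; each statement's English description precedes it below -/
import Mathlib

section
/- Let Γ be a finite n-player extensive-form game with imperfect information, chance, and perfect recall, and let {β_i}_{i∈N} be a perfect equilibrium (PE) of Γ. Then the product distribution μ ∈ Δ_Π defined by μ(π) := ∏_{i∈N} ∏_{I∈𝓘_i} β_i(π_i(I)) for every strategy profile π ∈ Π is an extensive-form perfect correlated equilibrium (EFPCE) of Γ. In particular, every PE constitutes an EFPCE (PE ⊆ EFPCE), and hence every finite EFG with perfect recall admits an EFPCE. -/
open scoped BigOperators Classical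
open Filter

noncomputable section

/-- A finite `n`-player extensive-form game with imperfect information, chance,
and perfect recall.  Nodes are identified with the list of actions on the path
from the root (so a node `h` is its own action sequence `σ(h)`). -/
structure EFG (n : ℕ) where
  /-- The (global) set of actions. -/
  Action : Type
  [finA : Fintype Action]
  [deqA : DecidableEq Action]
  /-- Information sets (of all players). -/
  Infoset : Type
  [finI : Fintype Infoset]
  [deqI : DecidableEq Infoset]
  /-- The set of histories (nodes), each identified by its action sequence. -/
  H : Finset (List Action)
  root_mem : ([] : List Action) ∈ H
  prefix_closed : ∀ ⦃h : List Action⦄, h ∈ H → ∀ ⦃h' : List Action⦄, h' <+: h → h' ∈ H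
  /-- Actions available at a node (empty iff the node is terminal). -/
  avail : List Action → Finset Action
  child_iff : ∀ h ∈ H, ∀ a : Action, ((h ++ [a]) ∈ H ↔ a ∈ avail h)
  /-- The infoset controlling a nonterminal node; `none` means chance moves. -/
  ctrl : List Action → Option Infoset
  /-- The player owning an infoset. -/
  infPlayer : Infoset → Fin n
  /-- The actions available at an infoset. -/
  infActions : Infoset → Finset Action
  infActions_nonempty : ∀ I : Infoset, (infActions I).Nonempty
  ctrl_actions : ∀ h ∈ H, ∀ I : Infoset, ctrl h = some I → avail h = infActions I
  /-- Action sets of distinct infosets are disjoint. -/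
  infActions_disjoint : ∀ I J : Infoset, I ≠ J → Disjoint (infActions I) (infActions J)
  /-- Probabilities of chance moves. -/
  chanceProb : List Action → Action → ℝ
  chance_pos : ∀ h ∈ H, avail h ≠ ∅ → ctrl h = none → ∀ a ∈ avail h, 0 < chanceProb h a
  chance_sum : ∀ h ∈ H, avail h ≠ ∅ → ctrl h = none → ∑ a ∈ avail h, chanceProb h a = 1
  /-- Utilities of the players over terminal nodes. -/
  util : Fin n → List Action → ℝ
  /-- `ownSeq I` is `σ_i(I)`, the sequence of player `i`'s own actions leading to `I`. -/
  ownSeq : Infoset → List Action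
  /-- Perfect recall: all nodes of an infoset are reached by the same sequence of
  the owning player's actions. -/
  perfect_recall : ∀ I : Infoset, ∀ h ∈ H, ctrl h = some I →
    h.filter (fun a => decide (∃ J : Infoset, infPlayer J = infPlayer I ∧ a ∈ infActions J))
      = ownSeq I

attribute [instance] EFG.finA EFG.deqA EFG.finI EFG.deqI

namespace EFG

variable {n : ℕ}

/-- Pure strategies `Π_i` of player `i`: an action at each of her infosets. -/
abbrev PureStrat (G : EFG n) (i : Fin n) :=
  ∀ J : {J : G.Infoset // G.infPlayer J = i}, {a : G.Action // a ∈ G.infActions J.1}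

/-- Pure strategy profiles `Π`. -/
abbrev Profile (G : EFG n) := ∀ i : Fin n, G.PureStrat i

/-- Terminal nodes `Z`. -/
def terminalSet (G : EFG n) : Finset (List G.Action) := G.H.filter (fun h => G.avail h = ∅)

/-- `μ ∈ Δ_Π`. -/
def IsDistribution (G : EFG n) (μ : G.Profile → ℝ) : Prop :=
  (∀ π, 0 ≤ μ π) ∧ ∑ π : G.Profile, μ π = 1

/-- `h` is a node belonging to the infoset `I`. -/
def InfNode (G : EFG n) (I : G.Infoset) (h : List G.Action) : Prop :=
  h ∈ G.H ∧ G.ctrl h = some I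

/-- `I ≺ J` : some node of `J` is a (strict) descendant of some node of `I`. -/
def infLt (G : EFG n) (I J : G.Infoset) : Prop :=
  ∃ h k, G.InfNode I h ∧ G.InfNode J k ∧ h <+: k ∧ h ≠ k

/-- `I ⪯ J`. -/
def infLe (G : EFG n) (I J : G.Infoset) : Prop := I = J ∨ G.infLt I J

/-- Behavior strategy profiles: `β i a` is the probability with which player `i`
plays action `a` (at the unique infoset where `a` is available). -/
def IsBehavior (G : EFG n) (β : Fin n → G.Action → ℝ) : Prop :=
  (∀ i a, 0 ≤ β i a ∧ β i a ≤ 1) ∧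
  ∀ I : G.Infoset, ∑ a ∈ G.infActions I, β (G.infPlayer I) a = 1

/-- Probability of traversing the path `rest` starting from node `pre`
when players play the behavior profile `β` and chance plays its fixed probabilities. -/
def reachAux (G : EFG n) (β : Fin n → G.Action → ℝ) :
    List G.Action → List G.Action → ℝ
  | _, [] => 1
  | pre, a :: rest =>
    (match G.ctrl pre with
     | some I => β (G.infPlayer I) a
     | none => G.chanceProb pre a) * reachAux G β (pre ++ [a]) rest

/-- Probability of reaching node `z` under behavior profile `β`. -/
def reach (G : EFG n) (β : Fin n → G.Action → ℝ) (z : List G.Action) : ℝ :=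
  G.reachAux β [] z

/-- Expected utility of player `i` under behavior profile `β`. -/
def EU (G : EFG n) (i : Fin n) (β : Fin n → G.Action → ℝ) : ℝ :=
  ∑ z ∈ G.terminalSet, G.reach β z * G.util i z

/-- Nash equilibrium in behavior strategies. -/
def IsNE (G : EFG n) (β : Fin n → G.Action → ℝ) : Prop :=
  G.IsBehavior β ∧ ∀ (i : Fin n) (βi : G.Action → ℝ),
    G.IsBehavior (Function.update β i βi) →
    G.EU i (Function.update β i βi) ≤ G.EU i β

/-- A valid lower-bound (tremble) function `η`. -/
def IsLowerBound (G : EFG n) (η : G.Action → ℝ) : Prop :=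
  (∀ a, 0 < η a ∧ η a < 1) ∧ ∀ I : G.Infoset, ∑ a ∈ G.infActions I, η a < 1

/-- `β` respects the lower bounds `η` of a perturbed game. -/
def Respects (G : EFG n) (η : G.Action → ℝ) (β : Fin n → G.Action → ℝ) : Prop :=
  ∀ I : G.Infoset, ∀ a ∈ G.infActions I, η a ≤ β (G.infPlayer I) a

/-- Nash equilibrium of the perturbed game `(Γ, η)`. -/
def IsPertNE (G : EFG n) (η : G.Action → ℝ) (β : Fin n → G.Action → ℝ) : Prop :=
  G.IsBehavior β ∧ G.Respects η β ∧
  ∀ (i : Fin n) (βi : G.Action → ℝ),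
    G.IsBehavior (Function.update β i βi) → G.Respects η (Function.update β i βi) →
    G.EU i (Function.update β i βi) ≤ G.EU i β

/-- Perfect equilibrium (Selten): a limit point of NEs of perturbed games with
vanishing trembles. -/
def IsPE (G : EFG n) (β : Fin n → G.Action → ℝ) : Prop :=
  ∃ η : ℕ → G.Action → ℝ, (∀ t, G.IsLowerBound (η t)) ∧
    (∀ a, Tendsto (fun t => η t a) atTop (nhds 0)) ∧
    ∃ βs : ℕ → (Fin n → G.Action → ℝ), (∀ t, G.IsPertNE (η t) (βs t)) ∧
      MapClusterPt β atTop βs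

/-! ### The extended game `Γ^ext(μ)` -/

/-- The information available at infoset `I` of the extended game (besides `I`
itself): the recommendations received at all own infosets `J ⪯ I`. -/
abbrev RecInfo (G : EFG n) (I : G.Infoset) :=
  ∀ J : {J : G.Infoset // G.infPlayer J = G.infPlayer I ∧ G.infLe J I},
    {a : G.Action // a ∈ G.infActions J.1}

/-- A behavior strategy of player `i` in the extended game: a distribution over
actions at each infoset of the extended game. -/
abbrev ExtBehavior (G : EFG n) (i : Fin n) :=
  ∀ I : {I : G.Infoset // G.infPlayer I = i}, G.RecInfo I.1 → G.Action → ℝ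

/-- The recommendation information at `I` induced by the recommended profile `π`. -/
def recOf (G : EFG n) (π : G.Profile) (I : G.Infoset) : G.RecInfo I :=
  fun J => π (G.infPlayer I) ⟨J.1, J.2.1⟩

/-- Validity of a behavior strategy profile of the extended game. -/
def IsExtBehavior (G : EFG n) (δ : ∀ i, G.ExtBehavior i) : Prop :=
  ∀ (i : Fin n) (I : {I : G.Infoset // G.infPlayer I = i}) (r : G.RecInfo I.1),
    (∀ a, 0 ≤ δ i I r a) ∧ (∑ a ∈ G.infActions I.1, δ i I r a = 1) ∧
    (∀ a, a ∉ G.infActions I.1 → δ i I r a = 0)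

/-- Probability of traversing `rest` from `pre` in the extended game when the
profile `π` has been recommended and players play `δ`. -/
def extReachAux (G : EFG n) (δ : ∀ i, G.ExtBehavior i) (π : G.Profile) :
    List G.Action → List G.Action → ℝ
  | _, [] => 1
  | pre, a :: rest =>
    (match G.ctrl pre with
     | some I => δ (G.infPlayer I) ⟨I, rfl⟩ (G.recOf π I) a
     | none => G.chanceProb pre a) * extReachAux G δ π (pre ++ [a]) rest

/-- Expected utility of player `i` in the extended game `Γ^ext(μ)` under the
behavior strategy profile `δ`. -/
def extEU (G : EFG n) (μ : G.Profile → ℝ) (i : Fin n) (δ : ∀ i, G.ExtBehavior i) : ℝ :=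
  ∑ π : G.Profile, μ π * ∑ z ∈ G.terminalSet, G.extReachAux δ π [] z * G.util i z

/-- `δ` is a Nash equilibrium of the extended game `Γ^ext(μ)`. -/
def ExtIsNE (G : EFG n) (μ : G.Profile → ℝ) (δ : ∀ i, G.ExtBehavior i) : Prop :=
  G.IsExtBehavior δ ∧ ∀ (i : Fin n) (δi : G.ExtBehavior i),
    G.IsExtBehavior (Function.update δ i δi) →
    G.extEU μ i (Function.update δ i δi) ≤ G.extEU μ i δ

/-- The "follow recommendations" strategy profile of the extended game. -/
def followRec (G : EFG n) : ∀ i, G.ExtBehavior i :=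
  fun _ I r a => if a = (r ⟨I.1, rfl, Or.inl rfl⟩).1 then 1 else 0

/-- `η̃(a)`: the maximum probability assignable to `a` at infoset `I` given `η`. -/
def resProb (G : EFG n) (η : G.Action → ℝ) (I : G.Infoset) (a : G.Action) : ℝ :=
  1 - ∑ a' ∈ (G.infActions I).erase a, η a'

/-- Following recommendations in the perturbed extended game `(Γ^ext(μ), η)`:
the recommended action gets all the residual probability, every other action
its lower bound. -/
def followRecPert (G : EFG n) (η : G.Action → ℝ) : ∀ i, G.ExtBehavior i :=
  fun _ I r a =>
    if a ∈ G.infActions I.1 then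
      (if a = (r ⟨I.1, rfl, Or.inl rfl⟩).1 then G.resProb η I.1 a else η a)
    else 0

/-- `δ` respects the lower bounds `η` in the extended game. -/
def ExtRespects (G : EFG n) (η : G.Action → ℝ) (δ : ∀ i, G.ExtBehavior i) : Prop :=
  ∀ (i : Fin n) (I : {I : G.Infoset // G.infPlayer I = i}) (r : G.RecInfo I.1),
    ∀ a ∈ G.infActions I.1, η a ≤ δ i I r a

/-- `δ` is a Nash equilibrium of the perturbed extended game `(Γ^ext(μ), η)`. -/
def ExtIsPertNE (G : EFG n) (μ : G.Profile → ℝ) (η : G.Action → ℝ)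
    (δ : ∀ i, G.ExtBehavior i) : Prop :=
  G.IsExtBehavior δ ∧ G.ExtRespects η δ ∧
  ∀ (i : Fin n) (δi : G.ExtBehavior i),
    G.IsExtBehavior (Function.update δ i δi) → G.ExtRespects η (Function.update δ i δi) →
    G.extEU μ i (Function.update δ i δi) ≤ G.extEU μ i δ

/-- Following recommendations is a perfect equilibrium of `Γ^ext(μ)`. -/
def FollowIsPE (G : EFG n) (μ : G.Profile → ℝ) : Prop :=
  ∃ η : ℕ → G.Action → ℝ, (∀ t, G.IsLowerBound (η t)) ∧
    (∀ a, Tendsto (fun t => η t a) atTop (nhds 0)) ∧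
    ∃ δs : ℕ → ∀ i, G.ExtBehavior i, (∀ t, G.ExtIsPertNE μ (η t) (δs t)) ∧
      MapClusterPt G.followRec atTop δs

/-- Extensive-form correlated equilibrium: following recommendations is an NE of
`Γ^ext(μ)`. -/
def IsEFCE (G : EFG n) (μ : G.Profile → ℝ) : Prop :=
  G.IsDistribution μ ∧ G.ExtIsNE μ G.followRec

/-- Extensive-form perfect correlated equilibrium: following recommendations is
a PE of `Γ^ext(μ)`. -/
def IsEFPCE (G : EFG n) (μ : G.Profile → ℝ) : Prop :=
  G.IsDistribution μ ∧ G.FollowIsPE μ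

/-- The product distribution on `Π` induced by a behavior profile `β`:
`μ(π) = ∏_i ∏_{I ∈ 𝓘_i} β_i(π_i(I))`. -/
def prodDist (G : EFG n) (β : Fin n → G.Action → ℝ) : G.Profile → ℝ :=
  fun π => ∏ i : Fin n, ∏ J : {J : G.Infoset // G.infPlayer J = i}, β i (π i J).1

/-! ### Trigger agents, `ξ^η`, and related sets -/

/-- `Z(I)`: terminal nodes reachable from infoset `I`. -/
def ZI (G : EFG n) (I : G.Infoset) : Finset (List G.Action) :=
  G.terminalSet.filter (fun z => ∃ h, G.InfNode I h ∧ h <+: z)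

/-- `Z(I,a)`: terminal nodes reachable by playing `a` at `I`. -/
def ZIa (G : EFG n) (I : G.Infoset) (a : G.Action) : Finset (List G.Action) :=
  G.terminalSet.filter (fun z => ∃ h, G.InfNode I h ∧ (h ++ [a]) <+: z)

/-- `K ∈ 𝓒(I,a)`: `K` immediately follows `I` when playing `a` (no other infoset
of the same player in between). -/
def ImmSucc (G : EFG n) (I : G.Infoset) (a : G.Action) (K : G.Infoset) : Prop :=
  G.infPlayer K = G.infPlayer I ∧
  ∃ h k, G.InfNode I h ∧ G.InfNode K k ∧ (h ++ [a]) <+: k ∧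
    ∀ h' : List G.Action, (h ++ [a]) <+: h' → h' <+: k → h' ≠ k →
      ∀ J : G.Infoset, G.infPlayer J = G.infPlayer I → ¬ G.InfNode J h'

/-- `Z⊥(I,a)`: terminal nodes reachable by playing `a` at `I` without traversing
any further infoset of the same player. -/
def Zbot (G : EFG n) (I : G.Infoset) (a : G.Action) : Finset (List G.Action) :=
  (G.ZIa I a).filter (fun z => ¬ ∃ K, G.ImmSucc I a K ∧ z ∈ G.ZI K)

/-- `π_i ∈ Π_i(a)`: the pure strategy `πi` prescribes action `a`. -/
def Prescribes (G : EFG n) {i : Fin n} (πi : G.PureStrat i) (a : G.Action) : Prop :=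
  ∃ J, (πi J).1 = a

/-- `π_i ∈ Π_i(z)`: `πi` plays so as to reach the node `z`. -/
def PlaysToNode (G : EFG n) {i : Fin n} (πi : G.PureStrat i) (z : List G.Action) : Prop :=
  ∀ (k : List G.Action) (a : G.Action) (J : G.Infoset) (hJ : G.infPlayer J = i),
    G.ctrl k = some J → (k ++ [a]) <+: z → (πi ⟨J, hJ⟩).1 = a

/-- `π_i ∈ Π_i(I)`: `πi` plays so as to reach the infoset `I` whenever possible. -/
def PlaysToInf (G : EFG n) {i : Fin n} (πi : G.PureStrat i) (I : G.Infoset) : Prop :=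
  ∀ h, G.InfNode I h → G.PlaysToNode πi h

/-- A distribution `μ̂_i ∈ Δ_{Π_i(I)}`. -/
def IsDistOn (G : EFG n) {i : Fin n} (μhat : G.PureStrat i → ℝ) (I : G.Infoset) : Prop :=
  (∀ πi, 0 ≤ μhat πi) ∧ (∑ πi : G.PureStrat i, μhat πi = 1) ∧
  ∀ πi, ¬ G.PlaysToInf πi I → μhat πi = 0

/-- `p_c(z)`: product of chance probabilities on the path to `z`. -/
def pcAux (G : EFG n) : List G.Action → List G.Action → ℝ
  | _, [] => 1
  | pre, a :: rest =>
    (match G.ctrl pre with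
     | some _ => 1
     | none => G.chanceProb pre a) * pcAux G (pre ++ [a]) rest

def pc (G : EFG n) (z : List G.Action) : ℝ := G.pcAux [] z

/-- Auxiliary for `ξ^η(z, π)`. -/
def xiFullAux (G : EFG n) (η : G.Action → ℝ) (π : G.Profile) :
    List G.Action → List G.Action → ℝ
  | _, [] => 1
  | pre, a :: rest =>
    (match G.ctrl pre with
     | some J =>
       if ((π (G.infPlayer J)) ⟨J, rfl⟩).1 = a then G.resProb η J a else η a
     | none => G.chanceProb pre a) * xiFullAux G η π (pre ++ [a]) rest

/-- `ξ^η(z, π)`: probability of reaching `z` when `π` is recommended and all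
players obey, with trembles `η`. -/
def xiFull (G : EFG n) (η : G.Action → ℝ) (π : G.Profile) (z : List G.Action) : ℝ :=
  G.xiFullAux η π [] z

/-- Auxiliary for `ξ^η(z, I, π)`. -/
def xiFromAux (G : EFG n) (η : G.Action → ℝ) (i : Fin n) (I : G.Infoset) (π : G.Profile) :
    List G.Action → List G.Action → ℝ
  | _, [] => 1
  | pre, a :: rest =>
    (match G.ctrl pre with
     | some J =>
       if G.infPlayer J = i ∧ (∃ h, G.InfNode I h ∧ h <+: pre) then 1
       else if ((π (G.infPlayer J)) ⟨J, rfl⟩).1 = a then G.resProb η J a else η a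
     | none => G.chanceProb pre a) * xiFromAux G η i I π (pre ++ [a]) rest

/-- `ξ^η(z, I, π)`: as `ξ^η(z, π)`, excluding player `i`'s actions leading from
`I` to `z`. -/
def xiFrom (G : EFG n) (η : G.Action → ℝ) (i : Fin n) (I : G.Infoset) (π : G.Profile)
    (z : List G.Action) : ℝ :=
  G.xiFromAux η i I π [] z

/-- Auxiliary for `ξ^η(z, π̂_i)` (only player `i`'s actions from `I` to `z`). -/
def xiOwnAux (G : EFG n) (η : G.Action → ℝ) (i : Fin n) (I : G.Infoset)
    (πi : G.PureStrat i) : List G.Action → List G.Action → ℝ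
  | _, [] => 1
  | pre, a :: rest =>
    (match G.ctrl pre with
     | some J =>
       if hJ : G.infPlayer J = i ∧ (∃ h, G.InfNode I h ∧ h <+: pre) then
         (if (πi ⟨J, hJ.1⟩).1 = a then G.resProb η J a else η a)
       else 1
     | none => 1) * xiOwnAux G η i I πi (pre ++ [a]) rest

/-- `ξ^η(z, π̂_i)` for `π̂_i ∈ Π_i(I)`: product over player `i`'s actions from
`I` to `z`. -/
def xiOwn (G : EFG n) (η : G.Action → ℝ) (i : Fin n) (I : G.Infoset)
    (πi : G.PureStrat i) (z : List G.Action) : ℝ :=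
  G.xiOwnAux η i I πi [] z

/-- `p^{η,I,a}_{μ,μ̂_i}(z)`: probability of reaching `z ∈ Z(I)` when the
`(I,a,μ̂_i)`-trigger agent gets triggered, in the perturbed extended game. -/
def pTrig (G : EFG n) (η : G.Action → ℝ) (μ : G.Profile → ℝ) (i : Fin n)
    (I : G.Infoset) (a : G.Action) (μhat : G.PureStrat i → ℝ) (z : List G.Action) : ℝ :=
  (∑ π : G.Profile, if G.Prescribes (π i) a then G.xiFrom η i I π z * μ π else 0) *
  (∑ πi : G.PureStrat i, if G.PlaysToInf πi I then G.xiOwn η i I πi z * μhat πi else 0)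

end EFG

/-! Once a profile `π` of recommendations is fixed, a strategy profile of `Γ^ext(μ)` is just a
behavior profile of `Γ`. If `μ` is a product over infosets and every player reacts to the current
recommendation only, then by perfect recall (an infoset is visited at most once along a path) the
players' random behavior strategies are realization equivalent to their expectations, as in Kuhn's
theorem. Hence a profile of this kind that induces a perturbed equilibrium `β'` of `Γ` is a
perturbed equilibrium of `Γ^ext(μ)`: given her own recommendations, a deviating player still plays
a behavior strategy of `Γ` against `β'`.

Let `βₜ → β` be equilibria of the games `(Γ, ηₜ)`. A recommendation drawn from `β` is turned into
a draw from `βₜ` by obeying it with weight `cₜ` and adding the remainder `βₜ - cₜ β`. The trembles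
`ηₜ` are respected as soon as `cₜ β ≤ βₜ - ηₜ`, and this leaves room for `cₜ → 1`, so the
resulting profiles converge to obedience.
-/

section CorrectedKernel

variable {ι : Type*}

lemma exists_tendsto_one_mul_le {α : Type*} {l : Filter α} {s : Finset ι} {p : ι → ℝ}
    {q : α → ι → ℝ} (hp : ∀ a ∈ s, 0 ≤ p a) (hq : ∀ t, ∀ a ∈ s, 0 ≤ q t a)
    (hlim : ∀ a ∈ s, Tendsto (fun t => q t a) l (nhds (p a))) :
    ∃ c : α → ℝ, (∀ t, 0 ≤ c t) ∧ (∀ t, ∀ a ∈ s, c t * p a ≤ q t a) ∧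
      Tendsto c l (nhds 1) := by
  -- Terms with `p a = 0` vanish, as `x / 0 = 0`, and those `a` only require `0 ≤ q t a`.
  refine ⟨fun t => max 0 (1 - ∑ a ∈ s, |q t a - p a| / p a), fun t => le_max_left _ _,
    fun t a ha => ?_, ?_⟩
  · rw [max_mul_of_nonneg _ _ (hp a ha), zero_mul]
    refine max_le (hq t a ha) ?_
    obtain h0 | hpos := (hp a ha).eq_or_lt
    · simpa only [← h0, mul_zero] using hq t a ha
    have hsingle : |q t a - p a| / p a ≤ ∑ b ∈ s, |q t b - p b| / p b :=
      Finset.single_le_sum (f := fun b => |q t b - p b| / p b)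
        (fun b hb => div_nonneg (abs_nonneg _) (hp b hb)) ha
    calc (1 - ∑ b ∈ s, |q t b - p b| / p b) * p a
        ≤ (1 - |q t a - p a| / p a) * p a := by gcongr
      _ = p a - |q t a - p a| := by field_simp
      _ ≤ q t a := by linarith [neg_abs_le (q t a - p a)]
  · have hsum : Tendsto (fun t => ∑ a ∈ s, |q t a - p a| / p a) l (nhds 0) := by
      rw [← Finset.sum_const_zero (s := s)]
      refine tendsto_finsetSum _ fun a ha => ?_
      simpa using ((hlim a ha).sub_const (p a)).abs.div_const (p a)
    simpa using (tendsto_const_nhds (x := (0 : ℝ))).max (hsum.const_sub 1)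

/-- The kernel used to turn a draw `b` from the distribution `p` into a draw `a` from `q`: keep `b`
with weight `c` and add the remainder `q - c p`, which is nonnegative if `c` is small enough. -/
def correctedKernel [DecidableEq ι] (c : ℝ) (p q : ι → ℝ) (b a : ι) : ℝ :=
  c * (if a = b then 1 else 0) + (q a - c * p a)

variable [DecidableEq ι] {c : ℝ} {p q : ι → ℝ}

lemma le_correctedKernel (hc : 0 ≤ c) {x : ℝ} {a : ι} (h : c * p a ≤ q a - x) (b : ι) :
    x ≤ correctedKernel c p q b a := by
  have hobey : 0 ≤ c * (if a = b then 1 else 0) := by positivity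
  rw [correctedKernel]
  linarith

lemma sum_correctedKernel {s : Finset ι} (hp : ∑ a ∈ s, p a = 1) (hq : ∑ a ∈ s, q a = 1)
    {b : ι} (hb : b ∈ s) : ∑ a ∈ s, correctedKernel c p q b a = 1 := by
  simp only [correctedKernel, Finset.sum_add_distrib, Finset.sum_sub_distrib, ← Finset.mul_sum,
    hp, hq, Finset.sum_ite_eq', if_pos hb]
  ring

lemma sum_mul_correctedKernel {s : Finset ι} (hp : ∑ a ∈ s, p a = 1) {a : ι} (ha : a ∈ s) :
    ∑ b ∈ s, p b * correctedKernel c p q b a = q a := by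
  have hobey : ∑ b ∈ s, p b * (c * if a = b then 1 else 0) = c * p a := by
    simp [ha, mul_comm]
  simp only [correctedKernel, mul_add, Finset.sum_add_distrib, ← Finset.sum_mul, hp, hobey]
  ring

lemma tendsto_correctedKernel {α : Type*} {l : Filter α} {c : α → ℝ} {q : α → ι → ℝ} {a : ι}
    (hc : Tendsto c l (nhds 1)) (hq : Tendsto (fun t => q t a) l (nhds (p a))) (b : ι) :
    Tendsto (fun t => correctedKernel (c t) p (q t) b a) l (nhds (if a = b then 1 else 0)) := by
  simpa [correctedKernel] using
    (hc.mul_const (if a = b then 1 else 0)).add (hq.sub (hc.mul_const (p a)))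

end CorrectedKernel

namespace EFG

variable {n : ℕ} {G : EFG n}

/-! ### Moves at an infoset -/

lemma mem_infActions_of_ctrl_eq {I : G.Infoset} {h rest : List G.Action} {a : G.Action}
    (hH : h ++ a :: rest ∈ G.H) (hI : G.ctrl h = some I) : a ∈ G.infActions I := by
  have hh : h ∈ G.H := G.prefix_closed hH (List.prefix_append _ _)
  rw [← G.ctrl_actions h hh I hI, ← G.child_iff h hh]
  exact G.prefix_closed hH ⟨rest, by simp⟩

lemma ctrl_append_cons_ne {I : G.Infoset} {h rest : List G.Action} {a : G.Action}
    (hH : h ++ a :: rest ∈ G.H) (hI : G.ctrl h = some I) :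
    G.ctrl (h ++ a :: rest) ≠ some I := by
  intro hI'
  have hrecall := (G.perfect_recall I _ hH hI').trans
    (G.perfect_recall I h (G.prefix_closed hH (List.prefix_append _ _)) hI).symm
  have hown : ∃ J, G.infPlayer J = G.infPlayer I ∧ a ∈ G.infActions J :=
    ⟨I, rfl, mem_infActions_of_ctrl_eq hH hI⟩
  rw [List.filter_append, List.filter_cons_of_pos (by simpa only [decide_eq_true_eq])] at hrecall
  simp at hrecall

/-- The actions taken at nodes of the infoset `I` when traversing `rest` from the node `pre`. -/
def movesAt (G : EFG n) (I : G.Infoset) : List G.Action → List G.Action → List G.Action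
  | _, [] => []
  | pre, a :: rest =>
    if G.ctrl pre = some I then a :: movesAt G I (pre ++ [a]) rest
    else movesAt G I (pre ++ [a]) rest

lemma prod_map_movesAt_cons (I : G.Infoset) (w : G.Action → ℝ) (pre rest : List G.Action)
    (a : G.Action) :
    ((G.movesAt I pre (a :: rest)).map w).prod =
      (if G.ctrl pre = some I then w a else 1) *
        ((G.movesAt I (pre ++ [a]) rest).map w).prod := by
  rw [movesAt]
  split_ifs <;> simp

lemma movesAt_eq_nil {I : G.Infoset} {pre rest : List G.Action}
    (h : ∀ l, l <+: rest → G.ctrl (pre ++ l) ≠ some I) : G.movesAt I pre rest = [] := by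
  induction rest generalizing pre with
  | nil => rfl
  | cons a rest ih =>
    have hpre : G.ctrl pre ≠ some I := by simpa using h [] List.nil_prefix
    rw [movesAt, if_neg hpre]
    exact ih fun l hl => by simpa using h (a :: l) (by simpa using hl)

lemma movesAt_eq_nil_or_singleton (I : G.Infoset) {pre rest : List G.Action}
    (hH : pre ++ rest ∈ G.H) :
    G.movesAt I pre rest = [] ∨ ∃ a ∈ G.infActions I, G.movesAt I pre rest = [a] := by
  induction rest generalizing pre with
  | nil => exact Or.inl rfl
  | cons a rest ih =>
    by_cases hI : G.ctrl pre = some I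
    · have hlater : G.movesAt I (pre ++ [a]) rest = [] := movesAt_eq_nil fun l hl => by
        have hl' : pre ++ a :: l ∈ G.H :=
          G.prefix_closed hH (by simpa [List.prefix_append_right_inj] using hl)
        simpa using ctrl_append_cons_ne hl' hI
      exact Or.inr ⟨a, mem_infActions_of_ctrl_eq hH hI, by rw [movesAt, if_pos hI, hlater]⟩
    · rw [movesAt, if_neg hI]
      exact ih (by simpa using hH)

lemma mem_infActions_of_mem_movesAt {I : G.Infoset} {pre rest : List G.Action}
    (hH : pre ++ rest ∈ G.H) {a : G.Action} (ha : a ∈ G.movesAt I pre rest) :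
    a ∈ G.infActions I := by
  obtain hnil | ⟨b, hb, hsingle⟩ := movesAt_eq_nil_or_singleton I hH
  · simp [hnil] at ha
  · rw [hsingle, List.mem_singleton] at ha
    rwa [ha]

/-! ### Reach probabilities, player by player -/

/-- The probability with which player `i`, playing the behavior strategy `b`, takes all of her
actions on the path to the node `z`. -/
def ownReach (G : EFG n) (i : Fin n) (b : G.Action → ℝ) (z : List G.Action) : ℝ :=
  ∏ J : {J : G.Infoset // G.infPlayer J = i}, ((G.movesAt J.1 [] z).map b).prod

lemma reachAux_eq_pcAux_mul_prod (β : Fin n → G.Action → ℝ) (pre rest : List G.Action) :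
    G.reachAux β pre rest =
      G.pcAux pre rest * ∏ I, ((G.movesAt I pre rest).map (β (G.infPlayer I))).prod := by
  induction rest generalizing pre with
  | nil => simp [reachAux, pcAux, movesAt]
  | cons a rest ih =>
    simp only [reachAux, pcAux, prod_map_movesAt_cons, ih, Finset.prod_mul_distrib]
    cases G.ctrl pre <;> simp <;> ring

lemma reach_eq_pc_mul_prod_ownReach (β : Fin n → G.Action → ℝ) (z : List G.Action) :
    G.reach β z = G.pc z * ∏ i, G.ownReach i (β i) z := by
  rw [reach, reachAux_eq_pcAux_mul_prod, ← Fintype.prod_fiberwise G.infPlayer, pc]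
  congr 1
  refine Finset.prod_congr rfl fun i _ => Finset.prod_congr rfl fun J _ => ?_
  rw [J.2]

/-! ### Product distributions -/

/-- The probability of the pure strategy `πi` when an action is drawn at each infoset of player `i`
independently according to `p`. -/
def pureProb (G : EFG n) {i : Fin n} (p : G.Action → ℝ) (πi : G.PureStrat i) : ℝ :=
  ∏ J, p (πi J).1

lemma sum_pureProb {i : Fin n} {p : G.Action → ℝ}
    (hp : ∀ J, G.infPlayer J = i → ∑ a ∈ G.infActions J, p a = 1) :
    ∑ πi : G.PureStrat i, G.pureProb p πi = 1 := by
  simp only [pureProb]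
  rw [← Fintype.prod_sum fun (J : {J // G.infPlayer J = i})
    (a : {a // a ∈ G.infActions J.1}) => p a.1]
  exact Finset.prod_eq_one fun J _ => (Finset.sum_coe_sort _ p).trans (hp J.1 J.2)

lemma IsBehavior.sum_eq_one {β : Fin n → G.Action → ℝ} (hβ : G.IsBehavior β) {i : Fin n}
    (J : G.Infoset) (hJ : G.infPlayer J = i) : ∑ a ∈ G.infActions J, β i a = 1 :=
  hJ ▸ hβ.2 J

lemma prodDist_nonneg {β : Fin n → G.Action → ℝ} (hβ : G.IsBehavior β) (π : G.Profile) :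
    0 ≤ G.prodDist β π :=
  Finset.prod_nonneg fun i _ => Finset.prod_nonneg fun _ _ => (hβ.1 i _).1

lemma isDistribution_prodDist {β : Fin n → G.Action → ℝ} (hβ : G.IsBehavior β) :
    G.IsDistribution (G.prodDist β) := by
  refine ⟨prodDist_nonneg hβ, ?_⟩
  calc ∑ π, G.prodDist β π = ∏ i, ∑ πi : G.PureStrat i, G.pureProb (β i) πi := by
        rw [Fintype.prod_sum]
        rfl
    _ = 1 := Finset.prod_eq_one fun _ _ => sum_pureProb hβ.sum_eq_one

lemma sum_prodDist_mul_reach (β : Fin n → G.Action → ℝ)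
    (f : ∀ j, G.PureStrat j → G.Action → ℝ) (z : List G.Action) :
    ∑ π, G.prodDist β π * G.reach (fun j => f j (π j)) z =
      G.pc z * ∏ j, ∑ πj, G.pureProb (β j) πj * G.ownReach j (f j πj) z := by
  rw [Fintype.prod_sum, Finset.mul_sum]
  refine Finset.sum_congr rfl fun π _ => ?_
  rw [reach_eq_pc_mul_prod_ownReach, Finset.prod_mul_distrib, mul_left_comm]
  rfl

/-! ### Realization equivalence -/

/-- Drawing `πj` according to `pureProb p` and then playing `f πj` reaches every node with the same
contribution of player `j` as playing `g πj` instead. A constant `g` is a single behavior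
strategy. -/
def RealizationEquiv (G : EFG n) {j : Fin n} (p : G.Action → ℝ)
    (f g : G.PureStrat j → G.Action → ℝ) : Prop :=
  ∀ z ∈ G.H, ∑ πj, G.pureProb p πj * G.ownReach j (f πj) z =
    ∑ πj, G.pureProb p πj * G.ownReach j (g πj) z

lemma sum_prodDist_mul_EU_congr {β : Fin n → G.Action → ℝ}
    {f g : ∀ j, G.PureStrat j → G.Action → ℝ}
    (h : ∀ j, G.RealizationEquiv (β j) (f j) (g j)) (i : Fin n) :
    ∑ π, G.prodDist β π * G.EU i (fun j => f j (π j)) =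
      ∑ π, G.prodDist β π * G.EU i (fun j => g j (π j)) := by
  simp only [EU, Finset.mul_sum, ← mul_assoc]
  rw [Finset.sum_comm, Finset.sum_comm (s := Finset.univ)]
  refine Finset.sum_congr rfl fun z hz => ?_
  rw [← Finset.sum_mul, ← Finset.sum_mul, sum_prodDist_mul_reach, sum_prodDist_mul_reach]
  simp only [h _ z (Finset.mem_filter.1 hz).1]

/-! ### The extended game, given the recommendations -/

/-- The recommendations received up to `I` by a player to whom `πi` is recommended. -/
def ownRec (G : EFG n) {i : Fin n} (πi : G.PureStrat i)
    (I : {I : G.Infoset // G.infPlayer I = i}) : G.RecInfo I.1 :=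
  fun J => πi ⟨J.1, J.2.1.trans I.2⟩

/-- The behavior strategy of `Γ` played by a player who uses `δi` in the extended game and to whom
`πi` is recommended. If `δi` plays available actions only, the one nonzero term of the sum is that
of the infoset offering `a`. -/
def condStrat (G : EFG n) {i : Fin n} (δi : G.ExtBehavior i) (πi : G.PureStrat i) :
    G.Action → ℝ :=
  fun a => ∑ J, δi J (G.ownRec πi J) a

lemma condStrat_apply {i : Fin n} {δi : G.ExtBehavior i}
    (hδi : ∀ I r, ∀ a ∉ G.infActions I.1, δi I r a = 0) (πi : G.PureStrat i)
    (I : {I : G.Infoset // G.infPlayer I = i}) {a : G.Action} (ha : a ∈ G.infActions I.1) :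
    G.condStrat δi πi a = δi I (G.ownRec πi I) a := by
  refine Fintype.sum_eq_single I fun J hJ => hδi J _ a fun haJ => ?_
  have hdisj := G.infActions_disjoint J.1 I.1 (Subtype.coe_ne_coe.2 hJ)
  exact Finset.disjoint_left.1 hdisj haJ ha

/-- The behavior profile of `Γ` played by players who use `δ` in the extended game and to whom `π`
is recommended. -/
def condProfile (G : EFG n) (δ : ∀ i, G.ExtBehavior i) (π : G.Profile) :
    Fin n → G.Action → ℝ :=
  fun i => G.condStrat (δ i) (π i)

variable {δ : ∀ i, G.ExtBehavior i}

lemma condProfile_apply (hδ : G.IsExtBehavior δ) (π : G.Profile) {I : G.Infoset}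
    {a : G.Action} (ha : a ∈ G.infActions I) :
    G.condProfile δ π (G.infPlayer I) a = δ (G.infPlayer I) ⟨I, rfl⟩ (G.recOf π I) a :=
  condStrat_apply (fun J r => (hδ _ J r).2.2) _ ⟨I, rfl⟩ ha

lemma isBehavior_condProfile (hδ : G.IsExtBehavior δ) (π : G.Profile) :
    G.IsBehavior (G.condProfile δ π) := by
  refine ⟨fun i a => ⟨Finset.sum_nonneg fun J _ => (hδ i J _).1 a, ?_⟩, fun I => ?_⟩
  · by_cases h : ∃ I : {I : G.Infoset // G.infPlayer I = i}, a ∈ G.infActions I.1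
    · obtain ⟨⟨I, rfl⟩, ha⟩ := h
      rw [condProfile_apply hδ π ha, ← (hδ _ ⟨I, rfl⟩ (G.recOf π I)).2.1]
      exact Finset.single_le_sum (fun b _ => (hδ _ ⟨I, rfl⟩ _).1 b) ha
    · rw [not_exists] at h
      refine (Finset.sum_eq_zero fun J _ => (hδ i J _).2.2 a (h J)).trans_le zero_le_one
  · rw [← (hδ _ ⟨I, rfl⟩ (G.recOf π I)).2.1]
    exact Finset.sum_congr rfl fun a ha => condProfile_apply hδ π ha

lemma respects_condProfile {η : G.Action → ℝ} (hδ : G.IsExtBehavior δ)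
    (hη : G.ExtRespects η δ) (π : G.Profile) : G.Respects η (G.condProfile δ π) :=
  fun I a ha => (hη _ ⟨I, rfl⟩ _ a ha).trans_eq (condProfile_apply hδ π ha).symm

lemma extReachAux_eq_reachAux (hδ : G.IsExtBehavior δ) (π : G.Profile)
    {pre rest : List G.Action} (hH : pre ++ rest ∈ G.H) :
    G.extReachAux δ π pre rest = G.reachAux (G.condProfile δ π) pre rest := by
  induction rest generalizing pre with
  | nil => rfl
  | cons a rest ih =>
    rw [extReachAux, reachAux, ih (by simpa using hH)]
    cases hI : G.ctrl pre with
    | none => rfl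
    | some I =>
      simp only [condProfile_apply hδ π (mem_infActions_of_ctrl_eq hH hI)]

lemma extEU_eq_sum_mul_EU (hδ : G.IsExtBehavior δ) (μ : G.Profile → ℝ) (i : Fin n) :
    G.extEU μ i δ = ∑ π, μ π * G.EU i (G.condProfile δ π) := by
  refine Finset.sum_congr rfl fun π _ => ?_
  congr 1
  refine Finset.sum_congr rfl fun z hz => ?_
  rw [extReachAux_eq_reachAux hδ π (pre := []) (Finset.mem_filter.1 hz).1, reach]

/-! ### Perturbed equilibria of the extended game -/

lemma IsBehavior.update {β γ : Fin n → G.Action → ℝ} (hβ : G.IsBehavior β)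
    (hγ : G.IsBehavior γ) (i : Fin n) : G.IsBehavior (Function.update β i (γ i)) := by
  refine ⟨fun j a => ?_, fun I => ?_⟩
  · obtain rfl | hj := eq_or_ne j i
    · simpa only [Function.update_self] using hγ.1 j a
    · simpa only [Function.update_of_ne hj] using hβ.1 j a
  · obtain rfl | hI := eq_or_ne (G.infPlayer I) i
    · simpa only [Function.update_self] using hγ.2 I
    · simpa only [Function.update_of_ne hI] using hβ.2 I

lemma Respects.update {η : G.Action → ℝ} {β γ : Fin n → G.Action → ℝ} (hβ : G.Respects η β)
    (hγ : G.Respects η γ) (i : Fin n) : G.Respects η (Function.update β i (γ i)) := by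
  intro I a ha
  obtain rfl | hI := eq_or_ne (G.infPlayer I) i
  · simpa only [Function.update_self] using hγ I a ha
  · simpa only [Function.update_of_ne hI] using hβ I a ha

section Equilibrium

variable {β β' : Fin n → G.Action → ℝ}

lemma extEU_prodDist_eq_of_realizationEquiv (hδ : G.IsExtBehavior δ)
    (h : ∀ j, G.RealizationEquiv (β j) (G.condStrat (δ j)) fun _ => β' j) (i : Fin n) :
    G.extEU (G.prodDist β) i δ = ∑ π, G.prodDist β π * G.EU i β' :=
  (extEU_eq_sum_mul_EU hδ _ i).trans (sum_prodDist_mul_EU_congr h i)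

lemma extEU_prodDist_eq_of_forall_ne_realizationEquiv (hδ : G.IsExtBehavior δ) {i : Fin n}
    (h : ∀ j ≠ i, G.RealizationEquiv (β j) (G.condStrat (δ j)) fun _ => β' j) :
    G.extEU (G.prodDist β) i δ =
      ∑ π, G.prodDist β π * G.EU i (Function.update β' i (G.condProfile δ π i)) := by
  let g : ∀ j, G.PureStrat j → G.Action → ℝ := fun j πj =>
    if j = i then G.condStrat (δ j) πj else β' j
  have hg : ∀ j, G.RealizationEquiv (β j) (G.condStrat (δ j)) (g j) := by
    intro j
    by_cases hj : j = i
    · simp only [g, if_pos hj]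
      exact fun _ _ => rfl
    · simpa only [g, if_neg hj] using h j hj
  have hupdate : ∀ π : G.Profile,
      (fun j => g j (π j)) = Function.update β' i (G.condProfile δ π i) := by
    intro π
    funext j
    obtain rfl | hj := eq_or_ne j i
    · simp [g, condProfile]
    · simp [g, hj]
  simp only [← hupdate]
  exact (extEU_eq_sum_mul_EU hδ _ i).trans (sum_prodDist_mul_EU_congr hg i)

theorem extIsPertNE_prodDist_of_realizationEquiv {η : G.Action → ℝ} (hβ : G.IsBehavior β)
    (hβ' : G.IsPertNE η β') (hδ : G.IsExtBehavior δ) (hη : G.ExtRespects η δ)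
    (h : ∀ j, G.RealizationEquiv (β j) (G.condStrat (δ j)) fun _ => β' j) :
    G.ExtIsPertNE (G.prodDist β) η δ := by
  refine ⟨hδ, hη, fun i δi hδ' hη' => ?_⟩
  have hothers : ∀ j ≠ i, G.RealizationEquiv (β j)
      (G.condStrat (Function.update δ i δi j)) fun _ => β' j := fun j hj => by
    simpa only [Function.update_of_ne hj] using h j
  rw [extEU_prodDist_eq_of_forall_ne_realizationEquiv hδ' hothers,
    extEU_prodDist_eq_of_realizationEquiv hδ h]
  refine Finset.sum_le_sum fun π _ =>
    mul_le_mul_of_nonneg_left (hβ'.2.2 i _ ?_ ?_) (prodDist_nonneg hβ π)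
  · exact hβ'.1.update (isBehavior_condProfile hδ' π) i
  · exact hβ'.2.1.update (respects_condProfile hδ' hη' π) i

end Equilibrium

/-! ### Reacting to the current recommendation only -/

/-- The profile of the extended game in which the player to whom `b` is recommended at `I` plays `a`
with probability `κ I b a`, whatever she was recommended before. -/
def respond (G : EFG n) (κ : G.Infoset → G.Action → G.Action → ℝ) : ∀ i, G.ExtBehavior i :=
  fun _ I r a => if a ∈ G.infActions I.1 then κ I.1 (r ⟨I.1, rfl, Or.inl rfl⟩).1 a else 0

lemma followRec_eq_respond : G.followRec = G.respond fun _ b a => if a = b then 1 else 0 := by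
  funext i I r a
  have hr := (r ⟨I.1, rfl, Or.inl rfl⟩).2
  rw [followRec, respond]
  split_ifs with hobey ha ha
  · rfl
  · exact absurd (hobey ▸ hr) ha
  · rfl
  · rfl

lemma tendsto_respond {α : Type*} {l : Filter α}
    {κs : α → G.Infoset → G.Action → G.Action → ℝ} {κ : G.Infoset → G.Action → G.Action → ℝ}
    (h : ∀ I b a, Tendsto (fun t => κs t I b a) l (nhds (κ I b a))) :
    Tendsto (fun t => G.respond (κs t)) l (nhds (G.respond κ)) := by
  refine tendsto_pi_nhds.2 fun i => tendsto_pi_nhds.2 fun I => tendsto_pi_nhds.2 fun r =>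
    tendsto_pi_nhds.2 fun a => ?_
  simp only [respond]
  split_ifs
  · exact h _ _ _
  · exact tendsto_const_nhds

variable {κ : G.Infoset → G.Action → G.Action → ℝ}

lemma extRespects_respond {η : G.Action → ℝ}
    (h : ∀ I, ∀ b ∈ G.infActions I, ∀ a ∈ G.infActions I, η a ≤ κ I b a) :
    G.ExtRespects η (G.respond κ) := by
  intro i I r a ha
  rw [respond, if_pos ha]
  exact h _ _ (Subtype.prop _) a ha

lemma isExtBehavior_respond
    (hnonneg : ∀ I, ∀ b ∈ G.infActions I, ∀ a ∈ G.infActions I, 0 ≤ κ I b a)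
    (hsum : ∀ I, ∀ b ∈ G.infActions I, ∑ a ∈ G.infActions I, κ I b a = 1) :
    G.IsExtBehavior (G.respond κ) := by
  refine fun i I r => ⟨fun a => ?_, ?_, fun a ha => if_neg ha⟩
  · rw [respond]
    split_ifs with ha
    · exact hnonneg _ _ (Subtype.prop _) a ha
    · exact le_rfl
  · exact (Finset.sum_congr rfl fun a ha => if_pos ha).trans (hsum _ _ (Subtype.prop _))

lemma ownReach_condStrat_respond {j : Fin n} (πj : G.PureStrat j) {z : List G.Action}
    (hz : z ∈ G.H) :
    G.ownReach j (G.condStrat (G.respond κ j) πj) z =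
      ∏ J, ((G.movesAt J.1 [] z).map (κ J.1 (πj J).1)).prod := by
  refine Finset.prod_congr rfl fun J _ => ?_
  congr 1
  refine List.map_congr_left fun a ha => ?_
  have haJ := mem_infActions_of_mem_movesAt (pre := []) hz ha
  exact (condStrat_apply (fun _ _ _ hb => if_neg hb) πj J haJ).trans (if_pos haJ)

lemma sum_mul_prod_map_movesAt (I : G.Infoset) {p q : G.Action → ℝ}
    {K : G.Action → G.Action → ℝ} (hp : ∑ a ∈ G.infActions I, p a = 1)
    (hK : ∀ a ∈ G.infActions I, ∑ b ∈ G.infActions I, p b * K b a = q a)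
    {pre rest : List G.Action} (hH : pre ++ rest ∈ G.H) :
    ∑ b : {b // b ∈ G.infActions I}, p b.1 * ((G.movesAt I pre rest).map (K b.1)).prod =
      ((G.movesAt I pre rest).map q).prod := by
  rw [Finset.sum_coe_sort _ fun b => p b * ((G.movesAt I pre rest).map (K b)).prod]
  obtain hnil | ⟨a, ha, hsingle⟩ := movesAt_eq_nil_or_singleton I hH
  · simpa [hnil] using hp
  · simpa [hsingle] using hK a ha

theorem realizationEquiv_condStrat_respond {j : Fin n} {p q : G.Action → ℝ}
    (hp : ∀ J, G.infPlayer J = j → ∑ a ∈ G.infActions J, p a = 1)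
    (hκ : ∀ J, G.infPlayer J = j → ∀ a ∈ G.infActions J,
      ∑ b ∈ G.infActions J, p b * κ J b a = q a) :
    G.RealizationEquiv p (G.condStrat (G.respond κ j)) fun _ => q := by
  intro z hz
  calc ∑ πj, G.pureProb p πj * G.ownReach j (G.condStrat (G.respond κ j) πj) z
      = ∑ πj : G.PureStrat j, ∏ J, p (πj J).1 *
          ((G.movesAt J.1 [] z).map (κ J.1 (πj J).1)).prod := by
        simp only [ownReach_condStrat_respond _ hz, pureProb, Finset.prod_mul_distrib]
    _ = ∏ J : {J // G.infPlayer J = j}, ∑ b : {a // a ∈ G.infActions J.1},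
          p b.1 * ((G.movesAt J.1 [] z).map (κ J.1 b.1)).prod := by
        rw [Fintype.prod_sum]
    _ = G.ownReach j q z := Finset.prod_congr rfl fun J _ =>
        sum_mul_prod_map_movesAt J.1 (hp J.1 J.2) (hκ J.1 J.2) (pre := []) hz
    _ = ∑ πj, G.pureProb p πj * G.ownReach j q z := by
        rw [← Finset.sum_mul, sum_pureProb hp, one_mul]

theorem extIsPertNE_respond_correctedKernel {η : G.Action → ℝ} (hη : ∀ a, 0 ≤ η a)
    {β β' : Fin n → G.Action → ℝ} (hβ : G.IsBehavior β) (hβ' : G.IsPertNE η β')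
    {c : G.Infoset → ℝ} (hc : ∀ I, 0 ≤ c I)
    (hle : ∀ I, ∀ a ∈ G.infActions I,
      c I * β (G.infPlayer I) a ≤ β' (G.infPlayer I) a - η a) :
    G.ExtIsPertNE (G.prodDist β) η
      (G.respond fun I => correctedKernel (c I) (β (G.infPlayer I)) (β' (G.infPlayer I))) := by
  have hbound : ∀ I, ∀ b ∈ G.infActions I, ∀ a ∈ G.infActions I,
      η a ≤ correctedKernel (c I) (β (G.infPlayer I)) (β' (G.infPlayer I)) b a :=
    fun I b _ a ha => le_correctedKernel (hc I) (hle I a ha) b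
  refine extIsPertNE_prodDist_of_realizationEquiv hβ hβ' ?_ (extRespects_respond hbound)
    fun j => realizationEquiv_condStrat_respond hβ.sum_eq_one ?_
  · exact isExtBehavior_respond (fun I b hb a ha => (hη a).trans (hbound I b hb a ha))
      fun I b hb => sum_correctedKernel (hβ.2 I) (hβ'.1.2 I) hb
  · rintro J rfl a ha
    exact sum_mul_correctedKernel (hβ.2 J) ha

/-! ### Perfect equilibria as limits -/

lemma isClosed_setOf_isBehavior : IsClosed {β | G.IsBehavior β} := by
  simp only [IsBehavior, Set.ofPred_and, Set.ofPred_forall]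
  refine (isClosed_iInter fun i => isClosed_iInter fun a => ?_).inter
    (isClosed_iInter fun I => isClosed_eq (by fun_prop) continuous_const)
  exact (isClosed_le continuous_const (by fun_prop)).inter
    (isClosed_le (by fun_prop) continuous_const)

lemma IsPE.exists_tendsto {β : Fin n → G.Action → ℝ} (hβ : G.IsPE β) :
    ∃ (η : ℕ → G.Action → ℝ) (βs : ℕ → Fin n → G.Action → ℝ),
      (∀ t, G.IsLowerBound (η t)) ∧ (∀ a, Tendsto (fun t => η t a) atTop (nhds 0)) ∧
      (∀ t, G.IsPertNE (η t) (βs t)) ∧ Tendsto βs atTop (nhds β) := by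
  obtain ⟨η, hη, hη0, βs, hNE, hcluster⟩ := hβ
  obtain ⟨φ, hφ, hlim⟩ := hcluster.tendsto_subseq
  exact ⟨η ∘ φ, βs ∘ φ, fun t => hη _, fun a => (hη0 a).comp hφ.tendsto_atTop,
    fun t => hNE _, hlim⟩

end EFG

/-- Any perfect equilibrium of `Γ` induces (as a product
distribution) an extensive-form perfect correlated equilibrium of `Γ`;
in particular `PE ⊆ EFPCE` and every finite EFG with perfect recall admits an EFPCE. -/
theorem pe_prodDist_isEFPCE {n : ℕ} (G : EFG n) (β : Fin n → G.Action → ℝ)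
    (hβ : G.IsPE β) : G.IsEFPCE (G.prodDist β) := by
  obtain ⟨η, βs, hη, hη0, hNE, hlim⟩ := hβ.exists_tendsto
  have hbeh : G.IsBehavior β :=
    EFG.isClosed_setOf_isBehavior.mem_of_tendsto hlim (.of_forall fun t => (hNE t).1)
  have hlim' : ∀ i a, Tendsto (fun t => βs t i a) atTop (nhds (β i a)) := fun i a =>
    (hlim.apply_nhds i).apply_nhds a
  have hslack : ∀ i a, Tendsto (fun t => βs t i a - η t a) atTop (nhds (β i a)) := fun i a => by
    simpa only [sub_zero] using (hlim' i a).sub (hη0 a)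
  choose c hc hle hc1 using fun I : G.Infoset =>
    exists_tendsto_one_mul_le (fun a _ => (hbeh.1 (G.infPlayer I) a).1)
      (fun t a ha => sub_nonneg.2 ((hNE t).2.1 I a ha)) fun a _ => hslack (G.infPlayer I) a
  refine ⟨EFG.isDistribution_prodDist hbeh, η, hη, hη0, fun t => G.respond fun I =>
    correctedKernel (c I t) (β (G.infPlayer I)) (βs t (G.infPlayer I)), fun t => ?_, ?_⟩
  · exact EFG.extIsPertNE_respond_correctedKernel (fun a => ((hη t).1 a).1.le) hbeh (hNE t)
      (fun I => hc I t) fun I => hle I t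
  · rw [EFG.followRec_eq_respond]
    exact (EFG.tendsto_respond fun I b a =>
      tendsto_correctedKernel (hc1 I) (hlim' _ a) b).mapClusterPt
end
end

section
/- There exists a finite n-player extensive-form game Γ with imperfect information and perfect recall and a Nash equilibrium behavior strategy profile {β_i}_{i∈N} of Γ such that the induced product distribution μ ∈ Δ_Π, defined by μ(π) = ∏_{i∈N} ∏_{I∈𝓘_i} β_i(π_i(I)) for all π ∈ Π, is not an extensive-form perfect correlated equilibrium of Γ. In particular, NE ⊄ EFPCE. -/
open scoped BigOperators Classical
open Filter

noncomputable section

/-!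
If a pure profile `π` is recommended with certainty, then recommendations carry no information:
an extended strategy plays, along the recommendations `π`, some behavior profile of `Γ`, and every
deviation in `Γ` can be played in `Γ^ext` by ignoring recommendations.  Equilibria of the perturbed
extended games therefore induce equilibria of the perturbed games, so a pure profile whose point
mass is an EFPCE is a perfect equilibrium.  It remains to find a pure Nash equilibrium that is not
perfect: in the two-player game paying `1` to both players if both choose `true` and `0` otherwise,
nobody gains by deviating alone once both choose `false`, but as soon as the opponent
trembles, `true` is strictly better than `false`.
-/

namespace EFG

variable {n : ℕ} {G : EFG n}

lemma eq_of_mem_infActions {I J : G.Infoset} {a : G.Action}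
    (hI : a ∈ G.infActions I) (hJ : a ∈ G.infActions J) : I = J := by
  by_contra h
  exact Finset.disjoint_left.1 (G.infActions_disjoint I J h) hI hJ

lemma PureStrat.coe_inj {i : Fin n} {σ : G.PureStrat i}
    {J K : {J : G.Infoset // G.infPlayer J = i}} : (σ J : G.Action) = σ K ↔ J = K :=
  ⟨fun h => Subtype.ext (eq_of_mem_infActions (h ▸ (σ J).2) (σ K).2), fun h => h ▸ rfl⟩

lemma prescribes_coe_iff {i : Fin n} {σ : G.PureStrat i} {J : {J : G.Infoset // G.infPlayer J = i}}
    (a : {a : G.Action // a ∈ G.infActions J.1}) : G.Prescribes σ a ↔ σ J = a := by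
  refine ⟨fun ⟨K, hK⟩ => ?_, fun h => ⟨J, congrArg Subtype.val h⟩⟩
  obtain rfl : K = J := Subtype.ext (eq_of_mem_infActions (hK ▸ (σ K).2) a.2)
  exact Subtype.ext hK

/-! ### Pure profiles -/

/-- The behavior profile in which every player plays her part of the pure profile `π`. -/
def pureBehavior (π : G.Profile) : Fin n → G.Action → ℝ :=
  fun i a => if G.Prescribes (π i) a then 1 else 0

lemma isBehavior_pureBehavior (π : G.Profile) : G.IsBehavior (pureBehavior π) := by
  refine ⟨fun i a => ?_, fun I => ?_⟩
  · unfold pureBehavior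
    split_ifs <;> norm_num
  · rw [← Finset.sum_coe_sort]
    simp [pureBehavior, prescribes_coe_iff (J := ⟨I, rfl⟩)]

theorem prodDist_pureBehavior (π : G.Profile) : G.prodDist (pureBehavior π) = Pi.single π 1 := by
  funext π'
  by_cases h : π' = π
  · subst h
    rw [Pi.single_eq_same]
    exact Finset.prod_eq_one fun i _ => Finset.prod_eq_one fun J _ => if_pos ⟨J, rfl⟩
  · rw [Pi.single_eq_of_ne h]
    obtain ⟨i, hi⟩ := Function.ne_iff.1 h
    obtain ⟨J, hJ⟩ := Function.ne_iff.1 hi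
    exact Finset.prod_eq_zero (Finset.mem_univ i) <| Finset.prod_eq_zero (Finset.mem_univ J) <|
      if_neg <| (prescribes_coe_iff _).not.2 (Ne.symm hJ)

/-! ### The extended game under a fixed recommendation -/

section Plays

/-- When the profile `π` is recommended, the extended strategies `δ` play the behavior profile `β`
of the original game. -/
def PlaysOn (δ : ∀ i, G.ExtBehavior i) (π : G.Profile) (β : Fin n → G.Action → ℝ) : Prop :=
  ∀ (i : Fin n) (I : {I : G.Infoset // G.infPlayer I = i}),
    ∀ a ∈ G.infActions I.1, δ i I (G.recOf π I.1) a = β i a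

variable {δ δ' : ∀ i, G.ExtBehavior i} {π : G.Profile} {β β' : Fin n → G.Action → ℝ}

lemma PlaysOn.update (h : PlaysOn δ π β) (h' : PlaysOn δ' π β') (i : Fin n) :
    PlaysOn (Function.update δ i (δ' i)) π (Function.update β i (β' i)) := by
  intro j
  rcases eq_or_ne j i with rfl | hji
  · simpa only [Function.update_self] using h' j
  · simpa only [Function.update_of_ne hji] using h j

lemma PlaysOn.extReachAux_eq (h : PlaysOn δ π β) {pre rest : List G.Action}
    (hH : pre ++ rest ∈ G.H) : G.extReachAux δ π pre rest = G.reachAux β pre rest := by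
  induction rest generalizing pre with
  | nil => rfl
  | cons a rest ih =>
    have hH' : (pre ++ [a]) ++ rest ∈ G.H := by simpa using hH
    have hchild : pre ++ [a] ∈ G.H := G.prefix_closed hH' (List.prefix_append _ _)
    have hpre : pre ∈ G.H := G.prefix_closed hH (List.prefix_append _ _)
    rw [extReachAux, reachAux, ih hH']
    congr 1
    split
    next I hI =>
      have ha : a ∈ G.infActions I :=
        G.ctrl_actions pre hpre I hI ▸ (G.child_iff pre hpre a).1 hchild
      exact h _ ⟨I, rfl⟩ a ha
    next => rfl

theorem PlaysOn.extEU_single (h : PlaysOn δ π β) (i : Fin n) :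
    G.extEU (Pi.single π 1) i δ = G.EU i β := by
  rw [extEU, Finset.sum_eq_single π (fun π' _ hπ' => by rw [Pi.single_eq_of_ne hπ', zero_mul])
    (by simp), Pi.single_eq_same, one_mul]
  refine Finset.sum_congr rfl fun z hz => ?_
  rw [reach, h.extReachAux_eq (Finset.mem_filter.1 hz).1]

end Plays

lemma IsExtBehavior.update {δ δ' : ∀ i, G.ExtBehavior i} (h : G.IsExtBehavior δ)
    (h' : G.IsExtBehavior δ') (i : Fin n) : G.IsExtBehavior (Function.update δ i (δ' i)) := by
  intro j
  rcases eq_or_ne j i with rfl | hji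
  · simpa only [Function.update_self] using h' j
  · simpa only [Function.update_of_ne hji] using h j

lemma ExtRespects.update {η : G.Action → ℝ} {δ δ' : ∀ i, G.ExtBehavior i}
    (h : G.ExtRespects η δ) (h' : G.ExtRespects η δ') (i : Fin n) :
    G.ExtRespects η (Function.update δ i (δ' i)) := by
  intro j
  rcases eq_or_ne j i with rfl | hji
  · simpa only [Function.update_self] using h' j
  · simpa only [Function.update_of_ne hji] using h j

/-- The extended strategies that play the behavior profile `β` whatever is recommended. -/
def ignoreRec (β : Fin n → G.Action → ℝ) : ∀ i, G.ExtBehavior i :=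
  fun i I _ a => if a ∈ G.infActions I.1 then β i a else 0

lemma playsOn_ignoreRec (β : Fin n → G.Action → ℝ) (π : G.Profile) :
    PlaysOn (ignoreRec β) π β :=
  fun _ _ _ ha => if_pos ha

lemma IsBehavior.isExtBehavior_ignoreRec {β : Fin n → G.Action → ℝ} (h : G.IsBehavior β) :
    G.IsExtBehavior (ignoreRec β) := by
  rintro _ ⟨I, rfl⟩ r
  refine ⟨fun a => ?_, ?_, fun a ha => if_neg ha⟩
  · unfold ignoreRec
    split_ifs
    exacts [(h.1 _ a).1, le_rfl]
  · rw [← h.2 I]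
    exact Finset.sum_congr rfl fun a ha => if_pos ha

lemma Respects.extRespects_ignoreRec {η : G.Action → ℝ} {β : Fin n → G.Action → ℝ}
    (h : G.Respects η β) : G.ExtRespects η (ignoreRec β) := by
  rintro _ ⟨I, rfl⟩ r a ha
  exact (h I a ha).trans_eq (if_pos ha).symm

/-- The behavior profile of the original game that the extended strategies `δ` play when `π` is
recommended.  An action `a` belongs to at most one infoset and `δ` vanishes off the available
actions, so at most one summand is nonzero; the sum spares us choosing the infoset of `a`. -/
def inducedBehavior (δ : ∀ i, G.ExtBehavior i) (π : G.Profile) : Fin n → G.Action → ℝ :=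
  fun i a => ∑ I : {I : G.Infoset // G.infPlayer I = i}, δ i I (G.recOf π I.1) a

lemma continuous_inducedBehavior (π : G.Profile) :
    Continuous fun δ : ∀ i, G.ExtBehavior i => inducedBehavior δ π := by
  unfold inducedBehavior
  fun_prop

section Induced

variable {δ : ∀ i, G.ExtBehavior i} {η : G.Action → ℝ}

lemma IsExtBehavior.playsOn_inducedBehavior (h : G.IsExtBehavior δ) (π : G.Profile) :
    PlaysOn δ π (inducedBehavior δ π) := by
  intro i I a ha
  rw [inducedBehavior, Finset.sum_eq_single_of_mem I (Finset.mem_univ I) fun J _ hJ => ?_]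
  exact (h i J _).2.2 a fun haJ => hJ (Subtype.ext (eq_of_mem_infActions haJ ha))

lemma IsExtBehavior.inducedBehavior_le_one (h : G.IsExtBehavior δ) (π : G.Profile) (i : Fin n)
    (a : G.Action) : inducedBehavior δ π i a ≤ 1 := by
  by_cases ha : ∃ I : {I : G.Infoset // G.infPlayer I = i}, a ∈ G.infActions I.1
  · obtain ⟨I, ha⟩ := ha
    obtain ⟨hnonneg, hsum, -⟩ := h i I (G.recOf π I.1)
    rw [← h.playsOn_inducedBehavior π i I a ha, ← hsum]
    exact Finset.single_le_sum (fun b _ => hnonneg b) ha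
  · push Not at ha
    have hzero : inducedBehavior δ π i a = 0 :=
      Finset.sum_eq_zero fun I _ => (h i I _).2.2 a (ha I)
    exact hzero.trans_le zero_le_one

lemma IsExtBehavior.isBehavior_inducedBehavior (h : G.IsExtBehavior δ) (π : G.Profile) :
    G.IsBehavior (inducedBehavior δ π) := by
  refine ⟨fun i a => ⟨Finset.sum_nonneg fun I _ => (h i I _).1 a,
    h.inducedBehavior_le_one π i a⟩, fun I => ?_⟩
  rw [← (h _ ⟨I, rfl⟩ (G.recOf π I)).2.1]
  exact Finset.sum_congr rfl fun a ha => (h.playsOn_inducedBehavior π _ ⟨I, rfl⟩ a ha).symm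

lemma ExtRespects.respects_inducedBehavior (h : G.ExtRespects η δ) (hδ : G.IsExtBehavior δ)
    (π : G.Profile) : G.Respects η (inducedBehavior δ π) := fun I a ha =>
  (h _ ⟨I, rfl⟩ (G.recOf π I) a ha).trans_eq (hδ.playsOn_inducedBehavior π _ ⟨I, rfl⟩ a ha)

theorem ExtIsPertNE.isPertNE_inducedBehavior {π : G.Profile}
    (h : G.ExtIsPertNE (Pi.single π 1) η δ) : G.IsPertNE η (inducedBehavior δ π) := by
  obtain ⟨hδ, hη, hopt⟩ := h
  refine ⟨hδ.isBehavior_inducedBehavior π, hη.respects_inducedBehavior hδ π,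
    fun i βi hβ hβη => ?_⟩
  have hplays := (hδ.playsOn_inducedBehavior π).update
    (playsOn_ignoreRec (Function.update (inducedBehavior δ π) i βi) π) i
  rw [Function.update_self] at hplays
  rw [← hplays.extEU_single i, ← (hδ.playsOn_inducedBehavior π).extEU_single i]
  exact hopt i _ (hδ.update hβ.isExtBehavior_ignoreRec i)
    (hη.update hβη.extRespects_ignoreRec i)

end Induced

lemma inducedBehavior_followRec (π : G.Profile) :
    inducedBehavior G.followRec π = pureBehavior π := by
  funext i a
  have hfollow : ∀ I : {I : G.Infoset // G.infPlayer I = i},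
      G.followRec i I (G.recOf π I.1) a = if (π i I).1 = a then 1 else 0 := by
    rintro ⟨I, rfl⟩
    exact if_congr eq_comm rfl rfl
  by_cases ha : G.Prescribes (π i) a
  · obtain ⟨J, rfl⟩ := ha
    rw [pureBehavior, if_pos ⟨J, rfl⟩, inducedBehavior]
    simp only [hfollow, PureStrat.coe_inj, Finset.sum_ite_eq', Finset.mem_univ, if_true]
  · have hne : ∀ J, (π i J).1 ≠ a := not_exists.1 ha
    rw [pureBehavior, if_neg ha, inducedBehavior]
    exact Finset.sum_eq_zero fun J _ => (hfollow J).trans (if_neg (hne J))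

theorem FollowIsPE.isPE_pureBehavior {π : G.Profile} (h : G.FollowIsPE (Pi.single π 1)) :
    G.IsPE (pureBehavior π) := by
  obtain ⟨η, hη, hη0, δ, hδ, hcluster⟩ := h
  refine ⟨η, hη, hη0, fun t => inducedBehavior (δ t) π,
    fun t => (hδ t).isPertNE_inducedBehavior, ?_⟩
  have hcont : ContinuousAt (fun δ => inducedBehavior δ π) G.followRec :=
    (continuous_inducedBehavior π).continuousAt
  simpa only [Function.comp_def, inducedBehavior_followRec] using hcluster.continuousAt_comp hcont

theorem IsEFPCE.isPE_of_prodDist_pureBehavior {π : G.Profile}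
    (h : G.IsEFPCE (G.prodDist (pureBehavior π))) : G.IsPE (pureBehavior π) := by
  rw [prodDist_pureBehavior] at h
  exact h.2.isPE_pureBehavior

end EFG

/-! ### A Nash equilibrium that is not perfect -/

namespace CoordinationGame

/-- The actions of the player moving at infoset `I`. -/
def moves (I : Fin 2) : Finset (Fin 2 × Bool) := {(I, true), (I, false)}

/-- The nodes of the game; player `0` is written first. -/
def nodes : Finset (List (Fin 2 × Bool)) :=
  {[], [(0, true)], [(0, false)],
    [(0, true), (1, true)], [(0, true), (1, false)],
    [(0, false), (1, true)], [(0, false), (1, false)]}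

/-- The infoset of a node.  Player `1` does not observe the move of player `0`, so both nodes at
depth one lie in the same infoset. -/
def control : List (Fin 2 × Bool) → Option (Fin 2)
  | [] => some 0
  | [_] => some 1
  | _ => none

/-- The actions available at a node. -/
def available (h : List (Fin 2 × Bool)) : Finset (Fin 2 × Bool) :=
  (control h).elim ∅ moves

lemma mem_nodes_of_mem_inits : ∀ h ∈ nodes, ∀ h' ∈ h.inits, h' ∈ nodes := by decide

lemma notMem_moves_of_mem_history :
    ∀ I, ∀ h ∈ nodes, control h = some I → ∀ a ∈ h, a ∉ moves I := by decide

/-- The two-player game in which both players simultaneously choose a Boolean and both get `1` if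
both choose `true`, and `0` otherwise.  Player `I` has the single infoset `I`, at which the action
`(I, b)` is the choice of `b`. -/
abbrev game : EFG 2 where
  Action := Fin 2 × Bool
  Infoset := Fin 2
  H := nodes
  root_mem := by decide
  prefix_closed h hh h' hp := mem_nodes_of_mem_inits h hh h' ((List.mem_inits _ _).2 hp)
  avail := available
  child_iff := by decide
  ctrl := control
  infPlayer := id
  infActions := moves
  infActions_nonempty := by decide
  ctrl_actions h _ I hI := by simp [available, hI]
  infActions_disjoint := by decide
  chanceProb _ _ := 0
  chance_pos h _ ha hc := by simp [available, hc] at ha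
  chance_sum h _ ha hc := by simp [available, hc] at ha
  util _ z := if z = [(0, true), (1, true)] then 1 else 0
  ownSeq _ := []
  perfect_recall I h hh hc := by
    simpa [List.filter_eq_nil_iff] using notMem_moves_of_mem_history I h hh hc

lemma EU_eq (i : Fin 2) (β : Fin 2 → game.Action → ℝ) :
    game.EU i β = β 0 (0, true) * β 1 (1, true) := by
  have hmem : [(0, true), (1, true)] ∈ game.terminalSet :=
    Finset.mem_filter.2 ⟨by decide, rfl⟩
  rw [EFG.EU, Finset.sum_eq_single_of_mem _ hmem fun z _ hz => by simp [hz]]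
  simp [EFG.reach, EFG.reachAux, control]

/-- The pure profile in which both players choose `false`. -/
def allFalse : game.Profile := fun _ J => ⟨(J.1, false), by simp [moves]⟩

lemma pureBehavior_allFalse_true (i j : Fin 2) :
    EFG.pureBehavior allFalse i (j, true) = 0 :=
  if_neg <| by simp [EFG.Prescribes, allFalse]

lemma isNE_pureBehavior_allFalse : game.IsNE (EFG.pureBehavior allFalse) := by
  refine ⟨EFG.isBehavior_pureBehavior _, fun i βi _ => ?_⟩
  rw [EU_eq, EU_eq]
  fin_cases i <;> simp [pureBehavior_allFalse_true]

/-- Player `0` choosing `false` with probability exactly `p`. -/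
def falseWithProb (p : ℝ) : game.Action → ℝ := fun a => if a.2 then 1 - p else p

section Perturbed

variable {η : game.Action → ℝ} {β : Fin 2 → game.Action → ℝ}

lemma isBehavior_update_falseWithProb (hβ : game.IsBehavior β) {p : ℝ} (hp : 0 ≤ p) (hp' : p ≤ 1) :
    game.IsBehavior (Function.update β 0 (falseWithProb p)) := by
  refine ⟨?_, fun I => ?_⟩
  · rw [Function.forall_update_iff β (p := fun _ b => ∀ a, 0 ≤ b a ∧ b a ≤ 1)]
    refine ⟨fun a => ?_, fun i _ => hβ.1 i⟩
    unfold falseWithProb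
    split_ifs <;> constructor <;> linarith
  · match I with
    | 0 => simp [moves, falseWithProb]
    | 1 => simpa using hβ.2 (1 : Fin 2)

lemma respects_update_falseWithProb (hη : game.IsLowerBound η) (hβ : game.Respects η β) :
    game.Respects η (Function.update β 0 (falseWithProb (η (0, false)))) := by
  have hsum : η (0, true) + η (0, false) < 1 := by simpa [moves] using hη.2 (0 : Fin 2)
  intro I a ha
  match I with
  | 0 =>
    obtain rfl | rfl : a = (0, true) ∨ a = (0, false) := by simpa [moves] using ha
    · simpa [falseWithProb] using by linarith
    · simp [falseWithProb]
  | 1 => simpa using hβ (1 : Fin 2) a ha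

lemma one_sub_le_of_isPertNE (hη : game.IsLowerBound η) (hβ : game.IsPertNE η β) :
    1 - η (0, false) ≤ β 0 (0, true) := by
  obtain ⟨hbeh, hresp, hopt⟩ := hβ
  obtain ⟨hpos, hlt⟩ := hη.1 (0, false)
  have hopponent : 0 < β 1 (1, true) :=
    (hη.1 (1, true)).1.trans_le (hresp (1 : Fin 2) (1, true) (by decide))
  have hdev := hopt 0 _ (isBehavior_update_falseWithProb hbeh hpos.le hlt.le)
    (respects_update_falseWithProb hη hresp)
  rw [EU_eq, EU_eq] at hdev
  simpa [falseWithProb] using le_of_mul_le_mul_right hdev hopponent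

end Perturbed

lemma not_isPE_pureBehavior_allFalse : ¬ game.IsPE (EFG.pureBehavior allFalse) := by
  rintro ⟨η, hη, hη0, β, hβ, hcluster⟩
  have hcont : Continuous fun β : Fin 2 → game.Action → ℝ => β 0 (0, true) := by fun_prop
  have hfreq : ∃ᶠ t in atTop, β t 0 (0, true) < 1 / 2 :=
    hcluster.frequently <| hcont.continuousAt.eventually_lt_const <| by
      simp [pureBehavior_allFalse_true]
  have hev : ∀ᶠ t in atTop, η t (0, false) < 1 / 2 :=
    (hη0 (0, false)).eventually_lt_const (by norm_num)
  obtain ⟨t, hβt, hηt⟩ := (hfreq.and_eventually hev).exists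
  linarith [one_sub_le_of_isPertNE (hη t) (hβ t)]

end CoordinationGame

/-- `NE ⊄ EFPCE`: there is a finite EFG with perfect recall and a
Nash equilibrium whose induced product distribution is not an EFPCE. -/
theorem ne_not_subset_efpce :
    ∃ (n : ℕ) (G : EFG n) (β : Fin n → G.Action → ℝ),
      G.IsNE β ∧ ¬ G.IsEFPCE (G.prodDist β) :=
  ⟨2, CoordinationGame.game, EFG.pureBehavior CoordinationGame.allFalse,
    CoordinationGame.isNE_pureBehavior_allFalse,
    fun h => CoordinationGame.not_isPE_pureBehavior_allFalse h.isPE_of_prodDist_pureBehavior⟩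
end
end
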